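/- Let f, g : I → ℝ be continuous and strictly monotone. Then A^[f] ≤ A^[g] (comparison for every n ≥ 1 and every a ∈ Iⁿ) holds if and only if there exists a single k ≥ 2 such that A^[f](a) ≤ A^[g](a) for all a ∈ I^k. -/

import Mathlib

open Set Function Filter

/-- The quasi-arithmetic mean generated by `f` on the interval `I`,
applied to a vector `a ∈ Iⁿ`: `f⁻¹((f a₁ + ⋯ + f aₙ)/n)`, where the
inverse of `f` is taken on `I`. -/
noncomputable def qam (I : Set ℝ) (f : ℝ → ℝ) {n : ℕ} (a : Fin n → ℝ) : ℝ :=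
  Function.invFunOn f I ((∑ i, f (a i)) / n)

/-- The natural (pointwise) partial order on quasi-arithmetic means:
`A^[f] ≤ A^[g]` iff `A^[f](a) ≤ A^[g](a)` for every `n ≥ 1` and every `a ∈ Iⁿ`. -/
def qamLE (I : Set ℝ) (f g : ℝ → ℝ) : Prop :=
  ∀ n : ℕ, 1 ≤ n → ∀ a : Fin n → ℝ, (∀ i, a i ∈ I) → qam I f a ≤ qam I g a

/-- `A^[f] = A^[g]` : equality of the two quasi-arithmetic means as means. -/
def qamEQ (I : Set ℝ) (f g : ℝ → ℝ) : Prop :=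
  ∀ n : ℕ, 1 ≤ n → ∀ a : Fin n → ℝ, (∀ i, a i ∈ I) → qam I f a = qam I g a

/-- `f` is strictly monotone on `I` (strictly increasing or strictly decreasing). -/
def StrictMonoOrAntiOn (f : ℝ → ℝ) (I : Set ℝ) : Prop :=
  StrictMonoOn f I ∨ StrictAntiOn f I

/-!
Replacing a generator by its negative does not change its mean, so `f` and `g` may be taken strictly
increasing. Then `A^[f](a) ≤ A^[g](a)` says that `φ = g ∘ f⁻¹` satisfies Jensen's inequality with
equal weights at the points `f (aᵢ)` of the interval `f(I)`. If this holds for all `k`-tuples, apply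
it to `(p, q, …, q)`: the function `φ` satisfies the convexity inequality with the fixed weights
`1/k` and `(k-1)/k`. Given the endpoints of a segment, the parameters at which `φ` does not exceed
its chord form a closed set stable under this weighted mean, so the set has no gaps and `φ` is
convex. Jensen's inequality then gives the comparison for every number of variables.
-/

theorem ordConnected_of_isClosed_of_exists_between {α : Type*} [ConditionallyCompleteLinearOrder α]
    [TopologicalSpace α] [OrderTopology α] {s : Set α} (hs : IsClosed s)
    (h : ∀ x ∈ s, ∀ y ∈ s, x < y → ∃ z ∈ s, x < z ∧ z < y) : s.OrdConnected := by
  refine ⟨fun x hx y hy t ht => ?_⟩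
  by_contra hts
  obtain ⟨l, ⟨hl, hlt⟩, hl_max⟩ : ∃ l, IsGreatest (s ∩ Iic t) l :=
    ⟨_, (hs.inter isClosed_Iic).isGreatest_csSup ⟨x, hx, ht.1⟩
      (bddAbove_Iic.mono inter_subset_right)⟩
  obtain ⟨r, ⟨hr, htr⟩, hr_min⟩ : ∃ r, IsLeast (s ∩ Ici t) r :=
    ⟨_, (hs.inter isClosed_Ici).isLeast_csInf ⟨y, hy, ht.2⟩
      (bddBelow_Ici.mono inter_subset_right)⟩
  have hlr : l < r := (lt_of_le_of_ne hlt (ne_of_mem_of_not_mem hl hts)).trans_le htr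
  obtain ⟨z, hz, hlz, hzr⟩ := h l hl r hr hlr
  rcases le_total z t with hzt | htz
  · exact (hl_max ⟨hz, hzt⟩).not_gt hlz
  · exact (hr_min ⟨hz, htz⟩).not_gt hzr

section ConvexOfContinuous

variable {E β : Type*} [AddCommGroup E] [Module ℝ E] [TopologicalSpace E] [IsTopologicalAddGroup E]
  [ContinuousSMul ℝ E] [AddCommGroup β] [PartialOrder β] [IsOrderedAddMonoid β] [Module ℝ β]
  [PosSMulMono ℝ β] [TopologicalSpace β] [IsTopologicalAddGroup β] [ContinuousSMul ℝ β]
  [OrderClosedTopology β] {s : Set E} {φ : E → β}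

theorem convexOn_of_continuousOn_of_fixed_weights (hs : Convex ℝ s) (hφ : ContinuousOn φ s)
    {a b : ℝ} (ha : 0 < a) (hb : 0 < b) (hab : a + b = 1)
    (h : ∀ x ∈ s, ∀ y ∈ s, φ (a • x + b • y) ≤ a • φ x + b • φ y) : ConvexOn ℝ s φ := by
  refine ⟨hs, fun x hx y hy c d hc hd hcd => ?_⟩
  set P : ℝ →ᵃ[ℝ] E := AffineMap.lineMap x y
  set L : ℝ →ᵃ[ℝ] β := AffineMap.lineMap (φ x) (φ y)
  set S : Set ℝ := {t ∈ Icc 0 1 | φ (P t) ≤ L t}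
  have hP : MapsTo P (Icc 0 1) s := hs.mapsTo_lineMap hx hy
  have hS_closed : IsClosed S := isClosed_Icc.isClosed_le
    (hφ.comp AffineMap.lineMap_continuous.continuousOn hP) AffineMap.lineMap_continuous.continuousOn
  have hS_mean : ∀ t ∈ S, ∀ u ∈ S, a • t + b • u ∈ S := by
    rintro t ⟨ht, hφt⟩ u ⟨hu, hφu⟩
    refine ⟨convex_Icc 0 1 ht hu ha.le hb.le hab, ?_⟩
    calc φ (P (a • t + b • u)) = φ (a • P t + b • P u) := by rw [Convex.combo_affine_apply hab]
      _ ≤ a • φ (P t) + b • φ (P u) := h _ (hP ht) _ (hP hu)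
      _ ≤ a • L t + b • L u := by gcongr
      _ = L (a • t + b • u) := (Convex.combo_affine_apply hab).symm
  have hS : S.OrdConnected := by
    refine ordConnected_of_isClosed_of_exists_between hS_closed fun t ht u hu htu =>
      ⟨_, hS_mean t ht u hu, ?_⟩
    rw [← mem_Ioo, ← openSegment_eq_Ioo htu]
    exact ⟨a, b, ha, hb, hab, rfl⟩
  have hd_mem : d ∈ S :=
    hS.out (x := 0) (y := 1) (by simp [S, P, L]) (by simp [S, P, L]) ⟨hd, by linarith⟩
  simpa [P, L, AffineMap.lineMap_apply_module, ← hcd] using hd_mem.2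

theorem convexOn_of_continuousOn_of_map_mean_le (hs : Convex ℝ s) (hφ : ContinuousOn φ s) {k : ℕ}
    (hk : 2 ≤ k)
    (h : ∀ u : Fin k → E, (∀ i, u i ∈ s) →
      φ ((k : ℝ)⁻¹ • ∑ i, u i) ≤ (k : ℝ)⁻¹ • ∑ i, φ (u i)) : ConvexOn ℝ s φ := by
  obtain ⟨j, rfl⟩ : ∃ j, k = j + 1 := ⟨k - 1, by omega⟩
  have hj : (0 : ℝ) < j := by exact_mod_cast (by omega : 0 < j)
  refine convexOn_of_continuousOn_of_fixed_weights hs hφ (a := (j + 1 : ℝ)⁻¹)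
    (b := (j + 1 : ℝ)⁻¹ * j) (by positivity) (by positivity) (by field_simp; ring)
    fun p hp q hq => ?_
  have hpq := h (Fin.cons p fun _ => q) (Fin.cases hp fun _ => hq)
  simpa [Fin.sum_univ_succ, mul_smul, Nat.cast_smul_eq_nsmul] using hpq

end ConvexOfContinuous

section EqualWeights

variable {𝕜 E β ι : Type*} [Field 𝕜] [LinearOrder 𝕜] [IsStrictOrderedRing 𝕜] [AddCommGroup E]
  [Module 𝕜 E] {s : Set E} {t : Finset ι} {u : ι → E}

theorem mean_mem_of_convex (hs : Convex 𝕜 s) (ht : t.Nonempty) (hu : ∀ i ∈ t, u i ∈ s) :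
    (t.card : 𝕜)⁻¹ • ∑ i ∈ t, u i ∈ s := by
  rw [Finset.smul_sum]
  exact hs.sum_mem (fun _ _ => by positivity) (by simp [ht.ne_empty]) hu

theorem map_mean_le_of_convexOn [AddCommGroup β] [PartialOrder β] [IsOrderedAddMonoid β]
    [Module 𝕜 β] [IsStrictOrderedModule 𝕜 β] {φ : E → β} (hφ : ConvexOn 𝕜 s φ) (ht : t.Nonempty)
    (hu : ∀ i ∈ t, u i ∈ s) :
    φ ((t.card : 𝕜)⁻¹ • ∑ i ∈ t, u i) ≤ (t.card : 𝕜)⁻¹ • ∑ i ∈ t, φ (u i) := by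
  simp only [Finset.smul_sum]
  exact hφ.map_sum_le (fun _ _ => by positivity) (by simp [ht.ne_empty]) hu

end EqualWeights

theorem continuousOn_invFunOn_of_strictMonoOn {α β : Type*} [LinearOrder α] [TopologicalSpace α]
    [OrderTopology α] [Nonempty α] [LinearOrder β] [TopologicalSpace β] [OrderClosedTopology β]
    {s : Set α} {f : α → β} (hs : s.OrdConnected) (hf : StrictMonoOn f s) :
    ContinuousOn (invFunOn f s) (f '' s) := by
  have hinv : LeftInvOn (invFunOn f s) f s := hf.injOn.leftInvOn_invFunOn
  rintro _ ⟨x, hx, rfl⟩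
  rw [ContinuousWithinAt, hinv hx]
  refine tendsto_order.2 ⟨fun a ha => ?_, fun b hb => ?_⟩
  · by_cases has : a ∈ s
    · filter_upwards [self_mem_nhdsWithin,
        mem_nhdsWithin_of_mem_nhds (Ioi_mem_nhds (hf has hx ha))]
      rintro _ ⟨y, hy, rfl⟩ hay
      rwa [hinv hy, ← hf.lt_iff_lt has hy]
    · filter_upwards [self_mem_nhdsWithin]
      rintro _ ⟨y, hy, rfl⟩
      rw [hinv hy]
      by_contra! hya
      exact has (hs.out hy hx ⟨hya, ha.le⟩)
  · by_cases hbs : b ∈ s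
    · filter_upwards [self_mem_nhdsWithin,
        mem_nhdsWithin_of_mem_nhds (Iio_mem_nhds (hf hx hbs hb))]
      rintro _ ⟨y, hy, rfl⟩ hyb
      rwa [hinv hy, ← hf.lt_iff_lt hy hbs]
    · filter_upwards [self_mem_nhdsWithin]
      rintro _ ⟨y, hy, rfl⟩
      rw [hinv hy]
      by_contra! hby
      exact hbs (hs.out hx hy ⟨hb.le, hby⟩)

section QuasiArithmeticMean

variable {I : Set ℝ} {f g : ℝ → ℝ} {n : ℕ} {a : Fin n → ℝ}

theorem mean_mem_image (hI : I.OrdConnected) (hf : ContinuousOn f I) (hn : 1 ≤ n)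
    (ha : ∀ i, a i ∈ I) : (∑ i, f (a i)) / n ∈ f '' I := by
  have : NeZero n := ⟨by omega⟩
  simpa [div_eq_inv_mul] using mean_mem_of_convex (hI.isPreconnected.image f hf).convex
    Finset.univ_nonempty fun i _ => mem_image_of_mem f (ha i)

theorem qam_mem (hI : I.OrdConnected) (hf : ContinuousOn f I) (hn : 1 ≤ n) (ha : ∀ i, a i ∈ I) :
    qam I f a ∈ I :=
  invFunOn_mem (mean_mem_image hI hf hn ha)

theorem map_qam (hI : I.OrdConnected) (hf : ContinuousOn f I) (hn : 1 ≤ n) (ha : ∀ i, a i ∈ I) :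
    f (qam I f a) = (∑ i, f (a i)) / n :=
  invFunOn_eq (mean_mem_image hI hf hn ha)

theorem qamEQ_neg (hI : I.OrdConnected) (hf : ContinuousOn f I) (hf_inj : InjOn f I) :
    qamEQ I f (-f) := by
  intro n hn a ha
  refine hf_inj (qam_mem hI hf hn ha) (qam_mem hI hf.neg hn ha) ?_
  have h_neg := map_qam hI hf.neg hn ha
  simp only [Pi.neg_apply, Finset.sum_neg_distrib, neg_div, neg_inj] at h_neg
  rw [map_qam hI hf hn ha, h_neg]

theorem exists_strictMonoOn_qamEQ (hI : I.OrdConnected) (hf : ContinuousOn f I)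
    (hf_mono : StrictMonoOrAntiOn f I) :
    ∃ f' : ℝ → ℝ, ContinuousOn f' I ∧ StrictMonoOn f' I ∧ qamEQ I f f' := by
  rcases hf_mono with hf_mono | hf_anti
  · exact ⟨f, hf, hf_mono, fun _ _ _ _ => rfl⟩
  · exact ⟨-f, hf.neg, hf_anti.neg, qamEQ_neg hI hf hf_anti.injOn⟩

theorem qam_le_qam_iff (hI : I.OrdConnected) (hf : ContinuousOn f I) (hf_inj : InjOn f I)
    (hg : ContinuousOn g I) (hg_mono : StrictMonoOn g I) (hn : 1 ≤ n) (ha : ∀ i, a i ∈ I) :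
    qam I f a ≤ qam I g a ↔
      (g ∘ invFunOn f I) ((n : ℝ)⁻¹ • ∑ i, f (a i)) ≤
        (n : ℝ)⁻¹ • ∑ i, (g ∘ invFunOn f I) (f (a i)) := by
  have hinv : ∀ i, invFunOn f I (f (a i)) = a i := fun i => hf_inj.leftInvOn_invFunOn (ha i)
  rw [← hg_mono.le_iff_le (qam_mem hI hf hn ha) (qam_mem hI hg hn ha), map_qam hI hg hn ha]
  simp only [qam, comp_apply, hinv, smul_eq_mul, div_eq_inv_mul]

theorem convexOn_comp_invFunOn_of_qam_le (hI : I.OrdConnected) (hf : ContinuousOn f I)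
    (hf_mono : StrictMonoOn f I) (hg : ContinuousOn g I) (hg_mono : StrictMonoOn g I) {k : ℕ}
    (hk : 2 ≤ k) (h : ∀ a : Fin k → ℝ, (∀ i, a i ∈ I) → qam I f a ≤ qam I g a) :
    ConvexOn ℝ (f '' I) (g ∘ invFunOn f I) := by
  have hcont : ContinuousOn (g ∘ invFunOn f I) (f '' I) :=
    hg.comp (continuousOn_invFunOn_of_strictMonoOn hI hf_mono) fun _ hu => invFunOn_mem hu
  refine convexOn_of_continuousOn_of_map_mean_le (hI.isPreconnected.image f hf).convex hcont
    hk fun u hu => ?_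
  choose a ha hau using hu
  obtain rfl : f ∘ a = u := funext hau
  exact (qam_le_qam_iff hI hf hf_mono.injOn hg hg_mono (by omega) ha).1 (h a ha)

theorem qamLE_of_convexOn_comp_invFunOn (hI : I.OrdConnected) (hf : ContinuousOn f I)
    (hf_inj : InjOn f I) (hg : ContinuousOn g I) (hg_mono : StrictMonoOn g I)
    (hφ : ConvexOn ℝ (f '' I) (g ∘ invFunOn f I)) : qamLE I f g := by
  intro n hn a ha
  have : NeZero n := ⟨by omega⟩
  refine (qam_le_qam_iff hI hf hf_inj hg hg_mono hn ha).2 ?_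
  simpa only [Finset.card_univ, Fintype.card_fin] using
    map_mean_le_of_convexOn hφ Finset.univ_nonempty fun i _ => mem_image_of_mem f (ha i)

end QuasiArithmeticMean

/-- `A^[f] ≤ A^[g]` (for all `n ≥ 1`) iff the comparison holds for
some single number of variables `k ≥ 2`. -/
theorem qam_le_iff_le_for_some_k
    (I : Set ℝ) (hI : I.OrdConnected) (hInontriv : ∃ x ∈ I, ∃ y ∈ I, x < y)
    (f g : ℝ → ℝ) (hfc : ContinuousOn f I) (hgc : ContinuousOn g I)
    (hfm : StrictMonoOrAntiOn f I) (hgm : StrictMonoOrAntiOn g I) :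
    qamLE I f g ↔
      ∃ k : ℕ, 2 ≤ k ∧ ∀ a : Fin k → ℝ, (∀ i, a i ∈ I) → qam I f a ≤ qam I g a := by
  refine ⟨fun h => ⟨2, le_rfl, h 2 one_le_two⟩, ?_⟩
  rintro ⟨k, hk, hle⟩
  obtain ⟨f', hfc', hf', hff'⟩ := exists_strictMonoOn_qamEQ hI hfc hfm
  obtain ⟨g', hgc', hg', hgg'⟩ := exists_strictMonoOn_qamEQ hI hgc hgm
  have hle' : ∀ a : Fin k → ℝ, (∀ i, a i ∈ I) → qam I f' a ≤ qam I g' a := fun a ha => by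
    rw [← hff' k (by omega) a ha, ← hgg' k (by omega) a ha]
    exact hle a ha
  have hconvex : ConvexOn ℝ (f' '' I) (g' ∘ invFunOn f' I) :=
    convexOn_comp_invFunOn_of_qam_le hI hfc' hf' hgc' hg' hk hle'
  intro n hn a ha
  rw [hff' n hn a ha, hgg' n hn a ha]
  exact qamLE_of_convexOn_comp_invFunOn hI hfc' hf'.injOn hgc' hg' hconvex n hn a ha
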